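/- For every ℓ, m ∈ ℤ≥1 and a ∈ ℂ∖{0}, the U'_q(L(sl₂))-modules V(ℓ,a) ⊗ V(m) and V(m) ⊗ V(ℓ,a) are isomorphic: there exists a linear bijection R : V(ℓ,a) ⊗ V(m) → V(m) ⊗ V(ℓ,a) intertwining the actions of all five operators Δ(E₀⁺), Δ(E₁⁺), Δ(E₁⁻), Δ(K₀), Δ(K₁). -/

import Mathlib

/-! The modules are intertwined by the constant `R`-matrix of `U_q(sl₂)`, composed with the flip.
Indeed, when the second evaluation parameter is `0`, `Δ(E₀⁺)` is a multiple of `F ⊗ 1` on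
`V(ℓ,a) ⊗ V(m)` and of `K⁻¹ ⊗ F` on `V(m) ⊗ V(ℓ,a)`, where `E = E₁⁺`, `F = E₁⁻`, `K = K₁`.
Put
`Θ = ∑ₙ cₙ Fⁿ ⊗ Eⁿ`, with `c₀ = 1`, `cₙ = cₙ₊₁ gₙ`, `gₙ = (q - q⁻¹)⁻¹ ∑_{k ≤ n} q^(-2k)`,
and let `C` be the diagonal operator `vᵢ ⊗ vⱼ ↦ q^(2ij - im - jℓ) vᵢ ⊗ vⱼ`, which is
`q^(h ⊗ h / 2)` up to a scalar.

* The identities `[Eⁿ⁺¹, F] = gₙ (K Eⁿ - Eⁿ K⁻¹)` and `[Fⁿ⁺¹, E] = gₙ (K⁻¹ Fⁿ - Fⁿ K)`, both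
  instances of `pow_comm_rel`, make the sum `Θ` telescope (`theta_intertwines`):
  `Θ (1 ⊗ F + F ⊗ K⁻¹) = (1 ⊗ F + F ⊗ K) Θ` and `Θ (E ⊗ 1 + K ⊗ E) = (E ⊗ 1 + K⁻¹ ⊗ E) Θ`.
  Moreover `Θ` commutes with `F ⊗ 1` and with `K ⊗ K`.
* Conjugation by `C` turns the right-hand sides into the opposite coproducts, and turns `F ⊗ 1`
  into `F ⊗ K⁻¹`.
* `Θ` is unipotent (`isUnit_theta`) and `C` is invertible (`isUnit_cartan`), so `C Θ` followed by
  the flip is an isomorphism. -/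


open scoped TensorProduct

noncomputable section

/-- The `q`-integer `[t] = (q^t - q^(-t))/(q - q⁻¹)`. -/
def qnum (q : ℂ) (t : ℤ) : ℂ := (q ^ t - q ^ (-t)) / (q - q⁻¹)

/-- The `q`-factorial `[t]! = [t][t-1]⋯[1]`. -/
def qfac (q : ℂ) (t : ℕ) : ℂ := ∏ k ∈ Finset.range t, qnum q ((k : ℤ) + 1)

/-- Commutator `[X,Y] = XY - YX`. -/
def brk {V : Type*} [AddCommGroup V] [Module ℂ V] (X Y : Module.End ℂ V) :
    Module.End ℂ V := X * Y - Y * X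

/-- `q`-commutator `[X,Y]_t = t XY - t⁻¹ YX`. -/
def brkq {V : Type*} [AddCommGroup V] [Module ℂ V] (t : ℂ) (X Y : Module.End ℂ V) :
    Module.End ℂ V := t • (X * Y) - t⁻¹ • (Y * X)

/-- A `U'_q(L(sl₂))`-module structure on a complex vector space `V`:
operators `(E₀⁺, E₁⁺, E₁⁻, K₀, K₁)` with `K₀, K₁` mutually inverse (hence invertible) and
the defining relations; `K₀ = K₁⁻¹` throughout. -/
structure IsUqpRep (q : ℂ) {V : Type*} [AddCommGroup V] [Module ℂ V]
    (E0 E1p E1m K0 K1 : Module.End ℂ V) : Prop where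
  K0K1 : K0 * K1 = 1
  K1K0 : K1 * K0 = 1
  K0E0 : K0 * E0 = q ^ 2 • (E0 * K0)
  K1E1p : K1 * E1p = q ^ 2 • (E1p * K1)
  K1E1m : K1 * E1m = (q ^ 2)⁻¹ • (E1m * K1)
  K1E0 : K1 * E0 = (q ^ 2)⁻¹ • (E0 * K1)
  K0E1p : K0 * E1p = (q ^ 2)⁻¹ • (E1p * K0)
  K0E1m : K0 * E1m = q ^ 2 • (E1m * K0)
  e1comm : E1p * E1m - E1m * E1p = (q - q⁻¹)⁻¹ • (K1 - K0)
  e0e1m : E0 * E1m = E1m * E0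
  serre01 : brk E0 (brkq q⁻¹ E0 (brkq q E0 E1p)) = 0
  serre10 : brk E1p (brkq q⁻¹ E1p (brkq q E1p E0)) = 0

/-- `K₀` of the evaluation module `V(ℓ,a)`: `K₀ vᵢ = q^(2i-ℓ) vᵢ`. -/
def evalK0 (q : ℂ) (ℓ : ℕ) : Module.End ℂ (Fin (ℓ + 1) → ℂ) :=
  (Matrix.diagonal fun i : Fin (ℓ + 1) => q ^ (2 * (i : ℤ) - ℓ)).mulVecLin

/-- `K₁` of the evaluation module `V(ℓ,a)`: `K₁ vᵢ = q^(ℓ-2i) vᵢ`. -/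
def evalK1 (q : ℂ) (ℓ : ℕ) : Module.End ℂ (Fin (ℓ + 1) → ℂ) :=
  (Matrix.diagonal fun i : Fin (ℓ + 1) => q ^ ((ℓ : ℤ) - 2 * i)).mulVecLin

/-- `E₀⁺` of the evaluation module `V(ℓ,a)`: `E₀⁺ vᵢ = a q [i+1] vᵢ₊₁`. -/
def evalE0 (q a : ℂ) (ℓ : ℕ) : Module.End ℂ (Fin (ℓ + 1) → ℂ) :=
  (Matrix.of fun j i : Fin (ℓ + 1) =>
    if (j : ℕ) = (i : ℕ) + 1 then a * q * qnum q ((i : ℤ) + 1) else 0).mulVecLin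

/-- `E₁⁺` of the evaluation module `V(ℓ,a)`: `E₁⁺ vᵢ = [ℓ-i+1] vᵢ₋₁`. -/
def evalE1p (q : ℂ) (ℓ : ℕ) : Module.End ℂ (Fin (ℓ + 1) → ℂ) :=
  (Matrix.of fun j i : Fin (ℓ + 1) =>
    if (i : ℕ) = (j : ℕ) + 1 then qnum q ((ℓ : ℤ) - (i : ℤ) + 1) else 0).mulVecLin

/-- `E₁⁻` of the evaluation module `V(ℓ,a)`: `E₁⁻ vᵢ = [i+1] vᵢ₊₁`. -/
def evalE1m (q : ℂ) (ℓ : ℕ) : Module.End ℂ (Fin (ℓ + 1) → ℂ) :=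
  (Matrix.of fun j i : Fin (ℓ + 1) =>
    if (j : ℕ) = (i : ℕ) + 1 then qnum q ((i : ℤ) + 1) else 0).mulVecLin

/-- Irreducibility: the only subspaces invariant under all five operators are `⊥` and `⊤`. -/
def IsIrred {V : Type*} [AddCommGroup V] [Module ℂ V]
    (E0 E1p E1m K0 K1 : Module.End ℂ V) : Prop :=
  ∀ W : Submodule ℂ V, (∀ v ∈ W, E0 v ∈ W) → (∀ v ∈ W, E1p v ∈ W) →
    (∀ v ∈ W, E1m v ∈ W) → (∀ v ∈ W, K0 v ∈ W) → (∀ v ∈ W, K1 v ∈ W) →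
    W = ⊥ ∨ W = ⊤

/-- Type `(1,1)`: `K₀` is diagonalizable with all eigenvalues of the form `q^(2i-d)`,
`0 ≤ i ≤ d`, i.e. the corresponding eigenspaces span. -/
def IsType11 (q : ℂ) {V : Type*} [AddCommGroup V] [Module ℂ V] (K0 : Module.End ℂ V) : Prop :=
  ∃ d : ℕ, ⨆ i : Fin (d + 1), Module.End.eigenspace K0 (q ^ (2 * (i : ℤ) - d)) = ⊤

/-- `Δ(K₀) = K₀ ⊗ K₀` on `V(ℓ,a) ⊗ V(m,b)`. -/
def dK0 (q : ℂ) (ℓ m : ℕ) :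
    Module.End ℂ (TensorProduct ℂ (Fin (ℓ + 1) → ℂ) (Fin (m + 1) → ℂ)) :=
  TensorProduct.map (evalK0 q ℓ) (evalK0 q m)

/-- `Δ(K₁) = K₁ ⊗ K₁` on `V(ℓ,a) ⊗ V(m,b)`. -/
def dK1 (q : ℂ) (ℓ m : ℕ) :
    Module.End ℂ (TensorProduct ℂ (Fin (ℓ + 1) → ℂ) (Fin (m + 1) → ℂ)) :=
  TensorProduct.map (evalK1 q ℓ) (evalK1 q m)

/-- `Δ(E₀⁺) = K₀ ⊗ E₀⁺ + E₀⁺ ⊗ 1` on `V(ℓ,a) ⊗ V(m,b)`. -/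
def dE0 (q : ℂ) (ℓ m : ℕ) (a b : ℂ) :
    Module.End ℂ (TensorProduct ℂ (Fin (ℓ + 1) → ℂ) (Fin (m + 1) → ℂ)) :=
  TensorProduct.map (evalK0 q ℓ) (evalE0 q b m) +
    TensorProduct.map (evalE0 q a ℓ) LinearMap.id

/-- `Δ(E₁⁺) = K₁ ⊗ E₁⁺ + E₁⁺ ⊗ 1` on `V(ℓ,a) ⊗ V(m,b)`. -/
def dE1p (q : ℂ) (ℓ m : ℕ) :
    Module.End ℂ (TensorProduct ℂ (Fin (ℓ + 1) → ℂ) (Fin (m + 1) → ℂ)) :=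
  TensorProduct.map (evalK1 q ℓ) (evalE1p q m) +
    TensorProduct.map (evalE1p q ℓ) LinearMap.id

/-- `Δ(E₁⁻) = 1 ⊗ E₁⁻ + E₁⁻ ⊗ K₁⁻¹` on `V(ℓ,a) ⊗ V(m,b)` (note `K₁⁻¹ = K₀`). -/
def dE1m (q : ℂ) (ℓ m : ℕ) :
    Module.End ℂ (TensorProduct ℂ (Fin (ℓ + 1) → ℂ) (Fin (m + 1) → ℂ)) :=
  TensorProduct.map LinearMap.id (evalE1m q m) +
    TensorProduct.map (evalE1m q ℓ) (evalK0 q m)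

/-- A linear map intertwines the five structure operators of two
`U'_q(L(sl₂))`-module structures. -/
def IntertwinesAll {V W : Type*} [AddCommGroup V] [Module ℂ V] [AddCommGroup W] [Module ℂ W]
    (σ : V →ₗ[ℂ] W) (A0 A1p A1m AK0 AK1 : Module.End ℂ V)
    (B0 B1p B1m BK0 BK1 : Module.End ℂ W) : Prop :=
  σ ∘ₗ A0 = B0 ∘ₗ σ ∧ σ ∘ₗ A1p = B1p ∘ₗ σ ∧ σ ∘ₗ A1m = B1m ∘ₗ σ ∧
    σ ∘ₗ AK0 = BK0 ∘ₗ σ ∧ σ ∘ₗ AK1 = BK1 ∘ₗ σ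

/-! ### Computations in an associative algebra -/

/-- The scalar `gₙ = (q - q⁻¹)⁻¹ ∑_{k ≤ n} q^(-2k)` in `[Eⁿ⁺¹, F] = gₙ (K Eⁿ - Eⁿ K⁻¹)`. -/
def gcoef (q : ℂ) (n : ℕ) : ℂ :=
  (q - q⁻¹)⁻¹ * ∑ k ∈ Finset.range (n + 1), ((q ^ 2)⁻¹) ^ k

/-- The coefficients `cₙ = ∏_{k < n} gₖ⁻¹` of the quasi-`R`-matrix `Θ`. -/
def ccoef (q : ℂ) (n : ℕ) : ℂ := ∏ k ∈ Finset.range n, (gcoef q k)⁻¹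

/-- The quasi-`R`-matrix `Θ = ∑_{n < N} cₙ xⁿ eⁿ`, for commuting elements `x`, `e` of an
algebra. -/
def theta {A : Type*} [Ring A] [Algebra ℂ A] (q : ℂ) (x e : A) (N : ℕ) : A :=
  ∑ n ∈ Finset.range N, ccoef q n • (x ^ n * e ^ n)

lemma q_sub_inv_ne_zero {q : ℂ} (hq0 : q ≠ 0) (hq : ∀ n : ℕ, 0 < n → q ^ n ≠ 1) :
    q - q⁻¹ ≠ 0 := by
  intro h
  apply hq 2 (by norm_num)
  have h1 : q = q⁻¹ := sub_eq_zero.mp h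
  calc q ^ 2 = q * q := sq q
    _ = q * q⁻¹ := by rw [← h1]
    _ = 1 := mul_inv_cancel₀ hq0

lemma gcoef_ne_zero {q : ℂ} (hq0 : q ≠ 0) (hq : ∀ n : ℕ, 0 < n → q ^ n ≠ 1) (n : ℕ) :
    gcoef q n ≠ 0 := by
  refine mul_ne_zero (inv_ne_zero (q_sub_inv_ne_zero hq0 hq)) ?_
  intro h
  have h1 := geom_sum_mul ((q ^ 2)⁻¹) (n + 1)
  rw [h, zero_mul] at h1
  have h2 : ((q ^ 2)⁻¹) ^ (n + 1) = 1 := (sub_eq_zero.mp h1.symm)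
  rw [inv_pow, inv_eq_one, ← pow_mul] at h2
  exact hq _ (by omega) h2

lemma ccoef_succ_mul {q : ℂ} (hq0 : q ≠ 0) (hq : ∀ n : ℕ, 0 < n → q ^ n ≠ 1) (n : ℕ) :
    ccoef q (n + 1) * gcoef q n = ccoef q n := by
  rw [ccoef, Finset.prod_range_succ, ← ccoef, mul_assoc, inv_mul_cancel₀ (gcoef_ne_zero hq0 hq n),
    mul_one]

section Alg
variable {A : Type*} [Ring A] [Algebra ℂ A]

/-- `[Eⁿ⁺¹, F] = gₙ (K Eⁿ - Eⁿ K')`. The hypotheses are also satisfied by `(F, E, K', K)` in place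
of `(E, F, K, K')`. -/
lemma pow_comm_rel (q : ℂ) {E F K K' : A} (hEF : E * F - F * E = (q - q⁻¹)⁻¹ • (K - K'))
    (hK : E * K = (q ^ 2)⁻¹ • (K * E)) (hK' : K' * E = (q ^ 2)⁻¹ • (E * K')) (n : ℕ) :
    E ^ (n + 1) * F - F * E ^ (n + 1) = gcoef q n • (K * E ^ n - E ^ n * K') := by
  have hKn : ∀ n : ℕ, K' * E ^ n = ((q ^ 2)⁻¹) ^ n • (E ^ n * K') := by
    intro n
    induction n with
    | zero => simp
    | succ k ih =>
      rw [pow_succ, ← mul_assoc, ih, smul_mul_assoc, mul_assoc, hK', mul_smul_comm, smul_smul,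
        ← mul_assoc, pow_succ ((q ^ 2)⁻¹)]
  induction n with
  | zero => simpa [gcoef] using hEF
  | succ k ih =>
    -- the two ways of splitting one term off the geometric sum `gₖ₊₁`
    have g1 : gcoef q (k + 1) = gcoef q k * (q ^ 2)⁻¹ + (q - q⁻¹)⁻¹ := by
      rw [gcoef, Finset.sum_range_succ', gcoef, mul_add, mul_assoc, Finset.sum_mul]
      simp only [pow_succ, pow_zero, mul_one]
    have g2 : gcoef q (k + 1) = gcoef q k + (q - q⁻¹)⁻¹ * ((q ^ 2)⁻¹) ^ (k + 1) := by
      rw [gcoef, Finset.sum_range_succ, gcoef, mul_add]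
    have e1 : E ^ (k + 1 + 1) * F - F * E ^ (k + 1 + 1)
        = E * (E ^ (k + 1) * F - F * E ^ (k + 1)) + (E * F - F * E) * E ^ (k + 1) := by
      rw [pow_succ' E (k + 1)]; noncomm_ring
    have e2 : E * (K * E ^ k) = (q ^ 2)⁻¹ • (K * E ^ (k + 1)) := by
      rw [← mul_assoc, hK, smul_mul_assoc, pow_succ' E, mul_assoc]
    have e3 : E * (E ^ k * K') = E ^ (k + 1) * K' := by rw [← mul_assoc, pow_succ']
    rw [e1, ih, hEF, mul_smul_comm, mul_sub, e2, e3, smul_mul_assoc, sub_mul, hKn, smul_sub,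
      smul_sub, smul_sub, smul_smul, smul_smul]
    conv_rhs => rw [g1, add_smul, ← g1, g2, add_smul]
    abel

/-- The defining property of `Θ`: the commutators of `f` with the powers of `e` telescope, and the
last term vanishes because `x` is nilpotent. -/
lemma theta_intertwines {q : ℂ} (hq0 : q ≠ 0) (hq : ∀ n : ℕ, 0 < n → q ^ n ≠ 1)
    {x e f k k' : A} (hxe : Commute x e) (hxf : Commute x f) (hxk : Commute x k)
    (h : ∀ n : ℕ, e ^ (n + 1) * f - f * e ^ (n + 1) = gcoef q n • (k * e ^ n - e ^ n * k'))
    {N : ℕ} (hN : x ^ (N + 1) = 0) :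
    theta q x e (N + 1) * (f + x * k') = (f + x * k) * theta q x e (N + 1) := by
  have key : ∀ n : ℕ, theta q x e (n + 1) * (f + x * k') - (f + x * k) * theta q x e (n + 1)
      = -(ccoef q n • (x ^ (n + 1) * (k * e ^ n - e ^ n * k'))) := by
    intro n
    induction n with
    | zero => simp [theta, ccoef, mul_sub]
    | succ n ih =>
      have hs : theta q x e (n + 1 + 1)
          = theta q x e (n + 1) + ccoef q (n + 1) • (x ^ (n + 1) * e ^ (n + 1)) := by
        rw [theta, Finset.sum_range_succ, theta]
      have a1 : x ^ (n + 1) * e ^ (n + 1) * (f + x * k') - (f + x * k) * (x ^ (n + 1) * e ^ (n + 1))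
          = x ^ (n + 1) * (e ^ (n + 1) * f - f * e ^ (n + 1))
            - x ^ (n + 1 + 1) * (k * e ^ (n + 1) - e ^ (n + 1) * k') := by
        have b1 : e ^ (n + 1) * x = x * e ^ (n + 1) := ((hxe.pow_right (n + 1)).eq).symm
        have b2 : f * x ^ (n + 1) = x ^ (n + 1) * f := ((hxf.pow_left (n + 1)).eq).symm
        have b3 : k * x ^ (n + 1) = x ^ (n + 1) * k := ((hxk.pow_left (n + 1)).eq).symm
        have c1 : x ^ (n + 1) * e ^ (n + 1) * (x * k') = x ^ (n + 1 + 1) * (e ^ (n + 1) * k') := by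
          rw [pow_succ x (n + 1), mul_assoc, ← mul_assoc (e ^ (n + 1)), b1]; simp only [mul_assoc]
        have c2 : f * (x ^ (n + 1) * e ^ (n + 1)) = x ^ (n + 1) * (f * e ^ (n + 1)) := by
          rw [← mul_assoc, b2, mul_assoc]
        have c3 : x * k * (x ^ (n + 1) * e ^ (n + 1)) = x ^ (n + 1 + 1) * (k * e ^ (n + 1)) := by
          rw [pow_succ' x (n + 1), mul_assoc, ← mul_assoc k, b3]; simp only [mul_assoc]
        rw [mul_add, add_mul, c1, c2, c3, mul_sub, mul_sub, mul_assoc]; abel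
      rw [hs, add_mul, mul_add (f + x * k), add_sub_add_comm, ih, smul_mul_assoc, mul_smul_comm, ← smul_sub,
        a1, h n, mul_smul_comm, smul_sub, smul_smul, ccoef_succ_mul hq0 hq]
      abel
  have := key N
  rwa [hN, zero_mul, smul_zero, neg_zero, sub_eq_zero] at this

lemma theta_swap (q : ℂ) {x e : A} (hxe : Commute x e) (N : ℕ) :
    theta q x e N = theta q e x N := by
  refine Finset.sum_congr rfl fun n _ => ?_
  rw [(hxe.pow_pow n n).eq]

lemma theta_commute (q : ℂ) {x e y : A} (hxe : Commute x e) (hy : Commute y (x * e)) (N : ℕ) :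
    Commute y (theta q x e N) := by
  refine Commute.sum_right _ _ _ fun n _ => ?_
  rw [← hxe.mul_pow]
  exact (hy.pow_right n).smul_right _

/-- `Θ - 1` is a multiple of the nilpotent element `xe`, by an element commuting with it. -/
lemma isUnit_theta (q : ℂ) {x e : A} (hxe : Commute x e) {N : ℕ} (hN : x ^ (N + 1) = 0) :
    IsUnit (theta q x e (N + 1)) := by
  have h1 : theta q x e (N + 1)
      = 1 + (x * e) * ∑ n ∈ Finset.range N, ccoef q (n + 1) • (x * e) ^ n := by
    rw [theta, Finset.sum_range_succ', add_comm, Finset.mul_sum]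
    congr 1
    · simp [ccoef]
    · refine Finset.sum_congr rfl fun n _ => ?_
      rw [← hxe.mul_pow, pow_succ', mul_smul_comm]
  rw [h1]
  refine IsNilpotent.isUnit_one_add ?_
  refine Commute.isNilpotent_mul_right ?_ ⟨N + 1, by rw [hxe.mul_pow, hN, zero_mul]⟩
  exact Commute.sum_right _ _ _ fun n _ => ((Commute.refl _).pow_right n).smul_right _

end Alg

/-! ### The evaluation modules -/

/-- The basis vector `vᵢ` of `V(ℓ,a)` for `i ≤ ℓ`, and `0` for `i > ℓ`. -/
def evec (ℓ i : ℕ) : Fin (ℓ + 1) → ℂ := fun j => if (j : ℕ) = i then 1 else 0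

lemma evec_eq_single (ℓ : ℕ) (i : Fin (ℓ + 1)) : evec ℓ i = Pi.single i 1 := by
  funext j
  simp [evec, Pi.single_apply, Fin.ext_iff]

lemma evec_eq_zero {ℓ i : ℕ} (h : ℓ < i) : evec ℓ i = 0 := by
  funext j
  have := j.2
  simp only [evec, Pi.zero_apply, ite_eq_right_iff]
  omega

lemma end_ext {ℓ : ℕ} {f g : Module.End ℂ (Fin (ℓ + 1) → ℂ)}
    (h : ∀ i, f (evec ℓ i) = g (evec ℓ i)) : f = g := by
  refine (Pi.basisFun ℂ (Fin (ℓ + 1))).ext fun i => ?_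
  simpa [evec_eq_single] using h i

lemma end_tensor_ext {ℓ m : ℕ}
    {f g : Module.End ℂ (TensorProduct ℂ (Fin (ℓ + 1) → ℂ) (Fin (m + 1) → ℂ))}
    (h : ∀ i j, f (evec ℓ i ⊗ₜ evec m j) = g (evec ℓ i ⊗ₜ evec m j)) : f = g := by
  refine ((Pi.basisFun ℂ (Fin (ℓ + 1))).tensorProduct (Pi.basisFun ℂ (Fin (m + 1)))).ext ?_
  rintro ⟨i, j⟩
  simpa [evec_eq_single] using h i j

/-- A matrix acts on `vᵢ` by its `i`-th column. -/
lemma mulVecLin_evec {ℓ : ℕ} (M : Matrix (Fin (ℓ + 1)) (Fin (ℓ + 1)) ℂ) (i j : Fin (ℓ + 1)) :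
    M.mulVecLin (evec ℓ i) j = M j i := by
  rw [evec_eq_single]; simp

lemma K1_evec (q : ℂ) (ℓ i : ℕ) : evalK1 q ℓ (evec ℓ i) = q ^ ((ℓ : ℤ) - 2 * i) • evec ℓ i := by
  rcases lt_or_ge ℓ i with h | h
  · simp [evec_eq_zero h]
  · obtain ⟨i, rfl⟩ : ∃ i' : Fin (ℓ + 1), (i' : ℕ) = i := ⟨⟨i, by omega⟩, rfl⟩
    funext j
    rw [evalK1, mulVecLin_evec]
    simp only [Matrix.diagonal_apply, evec, Pi.smul_apply, smul_eq_mul, Fin.ext_iff]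
    split_ifs with h1
    · simp [h1]
    · simp

lemma K0_evec (q : ℂ) (ℓ i : ℕ) : evalK0 q ℓ (evec ℓ i) = q ^ (2 * (i : ℤ) - ℓ) • evec ℓ i := by
  rcases lt_or_ge ℓ i with h | h
  · simp [evec_eq_zero h]
  · obtain ⟨i, rfl⟩ : ∃ i' : Fin (ℓ + 1), (i' : ℕ) = i := ⟨⟨i, by omega⟩, rfl⟩
    funext j
    rw [evalK0, mulVecLin_evec]
    simp only [Matrix.diagonal_apply, evec, Pi.smul_apply, smul_eq_mul, Fin.ext_iff]
    split_ifs with h1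
    · simp [h1]
    · simp

lemma E1m_evec (q : ℂ) (ℓ i : ℕ) :
    evalE1m q ℓ (evec ℓ i) = qnum q ((i : ℤ) + 1) • evec ℓ (i + 1) := by
  rcases lt_or_ge ℓ i with h | h
  · simp [evec_eq_zero h, evec_eq_zero (h.trans (Nat.lt_succ_self i))]
  · obtain ⟨i, rfl⟩ : ∃ i' : Fin (ℓ + 1), (i' : ℕ) = i := ⟨⟨i, by omega⟩, rfl⟩
    funext j
    rw [evalE1m, mulVecLin_evec]
    simp [evec]

lemma E1p_evec_zero (q : ℂ) (ℓ : ℕ) : evalE1p q ℓ (evec ℓ 0) = 0 := by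
  funext j
  have := mulVecLin_evec (Matrix.of fun j i : Fin (ℓ + 1) =>
    if (i : ℕ) = (j : ℕ) + 1 then qnum q ((ℓ : ℤ) - (i : ℤ) + 1) else 0) 0 j
  simpa [evalE1p] using this

lemma E1p_evec_succ (q : ℂ) (ℓ i : ℕ) :
    evalE1p q ℓ (evec ℓ (i + 1)) = qnum q ((ℓ : ℤ) - i) • evec ℓ i := by
  rcases lt_or_ge ℓ (i + 1) with h | h
  · rw [evec_eq_zero h, map_zero]
    rcases lt_or_ge ℓ i with h' | h'
    · simp [evec_eq_zero h']
    · -- here `i = ℓ`, and `[0] = 0`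
      obtain rfl : ℓ = i := by omega
      simp [qnum]
  · obtain ⟨k, hk⟩ : ∃ i' : Fin (ℓ + 1), (i' : ℕ) = i + 1 := ⟨⟨i + 1, by omega⟩, rfl⟩
    funext j
    rw [← hk, evalE1p, mulVecLin_evec]
    simp only [Matrix.of_apply, evec, Pi.smul_apply, smul_eq_mul, hk]
    by_cases h1 : (j : ℕ) = i
    · simp only [h1, if_true, mul_one]
      congr 1; push_cast; ring
    · rw [if_neg (by omega), if_neg h1, mul_zero]

lemma evalE0_zero (q : ℂ) (ℓ : ℕ) : evalE0 q 0 ℓ = 0 := by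
  refine LinearMap.ext fun v => ?_
  funext j
  simp [evalE0, Matrix.mulVec, dotProduct]

lemma evalE0_eq (q a : ℂ) (ℓ : ℕ) : evalE0 q a ℓ = (a * q) • evalE1m q ℓ := by
  refine LinearMap.ext fun v => ?_
  funext j
  simp only [evalE0, evalE1m, Matrix.mulVecLin_apply, Matrix.mulVec, dotProduct, Matrix.of_apply,
    LinearMap.smul_apply, Pi.smul_apply, smul_eq_mul, Finset.mul_sum]
  refine Finset.sum_congr rfl fun i _ => ?_
  split_ifs <;> ring

lemma E1m_pow (q : ℂ) (ℓ : ℕ) : evalE1m q ℓ ^ (ℓ + 1) = 0 := by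
  have h : ∀ n i : ℕ, ∃ c : ℂ, (evalE1m q ℓ ^ n) (evec ℓ i) = c • evec ℓ (i + n) := by
    intro n
    induction n with
    | zero => exact fun i => ⟨1, by simp⟩
    | succ n ih =>
      intro i
      obtain ⟨c, hc⟩ := ih i
      exact ⟨c * qnum q (((i + n : ℕ) : ℤ) + 1), by
        rw [pow_succ', Module.End.mul_apply, hc, map_smul, E1m_evec, smul_smul, add_assoc]⟩
  refine end_ext fun i => ?_
  obtain ⟨c, hc⟩ := h (ℓ + 1) i
  rw [hc, evec_eq_zero (by omega)]
  simp

lemma E1p_pow (q : ℂ) (ℓ : ℕ) : evalE1p q ℓ ^ (ℓ + 1) = 0 := by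
  have h : ∀ n i : ℕ, i < n → (evalE1p q ℓ ^ n) (evec ℓ i) = 0 := by
    intro n
    induction n with
    | zero => intro i hi; omega
    | succ n ih =>
      intro i hi
      rw [pow_succ, Module.End.mul_apply]
      cases i with
      | zero => rw [E1p_evec_zero, map_zero]
      | succ i => rw [E1p_evec_succ, map_smul, ih i (by omega), smul_zero]
  refine end_ext fun i => ?_
  rcases lt_or_ge ℓ i with h' | h'
  · simp [evec_eq_zero h']
  · simpa using h (ℓ + 1) i (by omega)


lemma E1p_K1 {q : ℂ} (hq0 : q ≠ 0) (ℓ : ℕ) :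
    evalE1p q ℓ * evalK1 q ℓ = (q ^ 2)⁻¹ • (evalK1 q ℓ * evalE1p q ℓ) := by
  refine end_ext fun i => ?_
  cases i with
  | zero => simp [K1_evec, E1p_evec_zero]
  | succ i =>
    simp only [Module.End.mul_apply, LinearMap.smul_apply, K1_evec, E1p_evec_succ, map_smul,
      smul_smul]
    congr 1
    rw [← zpow_natCast, ← zpow_neg, mul_comm, mul_left_comm, ← zpow_add₀ hq0]
    congr 2; push_cast; ring

lemma K0_E1p {q : ℂ} (hq0 : q ≠ 0) (ℓ : ℕ) :
    evalK0 q ℓ * evalE1p q ℓ = (q ^ 2)⁻¹ • (evalE1p q ℓ * evalK0 q ℓ) := by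
  refine end_ext fun i => ?_
  cases i with
  | zero => simp [K0_evec, E1p_evec_zero]
  | succ i =>
    simp only [Module.End.mul_apply, LinearMap.smul_apply, K0_evec, E1p_evec_succ, map_smul,
      smul_smul]
    rw [← mul_assoc, ← zpow_natCast, ← zpow_neg, ← zpow_add₀ hq0, mul_comm]
    congr 3; push_cast; ring

lemma E1m_K0 {q : ℂ} (hq0 : q ≠ 0) (ℓ : ℕ) :
    evalE1m q ℓ * evalK0 q ℓ = (q ^ 2)⁻¹ • (evalK0 q ℓ * evalE1m q ℓ) := by
  refine end_ext fun i => ?_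
  simp only [Module.End.mul_apply, LinearMap.smul_apply, K0_evec, E1m_evec, map_smul, smul_smul]
  congr 1
  rw [← zpow_natCast, ← zpow_neg, mul_comm, mul_left_comm, ← zpow_add₀ hq0]
  congr 2; push_cast; ring

lemma K1_E1m {q : ℂ} (hq0 : q ≠ 0) (ℓ : ℕ) :
    evalK1 q ℓ * evalE1m q ℓ = (q ^ 2)⁻¹ • (evalE1m q ℓ * evalK1 q ℓ) := by
  refine end_ext fun i => ?_
  simp only [Module.End.mul_apply, LinearMap.smul_apply, K1_evec, E1m_evec, map_smul, smul_smul]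
  rw [← mul_assoc, ← zpow_natCast, ← zpow_neg, ← zpow_add₀ hq0, mul_comm]
  congr 3; push_cast; ring

lemma E1p_E1m {q : ℂ} (hq0 : q ≠ 0) (hq : ∀ n : ℕ, 0 < n → q ^ n ≠ 1) (ℓ : ℕ) :
    evalE1p q ℓ * evalE1m q ℓ - evalE1m q ℓ * evalE1p q ℓ
      = (q - q⁻¹)⁻¹ • (evalK1 q ℓ - evalK0 q ℓ) := by
  have hd := q_sub_inv_ne_zero hq0 hq
  -- `[i+1][ℓ-i] - [i][ℓ-i+1] = [ℓ-2i]`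
  have hnum : ∀ i : ℤ, qnum q (i + 1) * qnum q (ℓ - i) - qnum q (ℓ - i + 1) * qnum q i
      = (q - q⁻¹)⁻¹ * (q ^ ((ℓ : ℤ) - 2 * i) - q ^ (2 * i - (ℓ : ℤ))) := by
    intro i
    obtain ⟨x, hx⟩ : ∃ x, x = q ^ i := ⟨_, rfl⟩
    obtain ⟨y, hy⟩ : ∃ y, y = q ^ (ℓ : ℤ) := ⟨_, rfl⟩
    have hx0 : x ≠ 0 := hx ▸ zpow_ne_zero _ hq0
    have hy0 : y ≠ 0 := hy ▸ zpow_ne_zero _ hq0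
    have hp : ∀ a b c : ℤ, q ^ (a * ℓ + b * i + c) = y ^ a * x ^ b * q ^ c := by
      intro a b c
      rw [zpow_add₀ hq0, zpow_add₀ hq0, hx, hy, ← zpow_mul, ← zpow_mul, mul_comm a, mul_comm b]
    have p1 := hp 0 1 1
    have p2 := hp 0 (-1) (-1)
    have p3 := hp 1 (-1) 0
    have p4 := hp (-1) 1 0
    have p5 := hp 1 (-1) 1
    have p6 := hp (-1) 1 (-1)
    have p7 := hp 1 (-2) 0
    have p8 := hp (-1) 2 0
    simp only [qnum]
    rw [show -(i + 1) = 0 * ℓ + (-1) * i + (-1) by ring, show i + 1 = 0 * ℓ + 1 * i + 1 by ring,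
      show -((ℓ : ℤ) - i) = (-1) * ℓ + 1 * i + 0 by ring,
      show -((ℓ : ℤ) - i + 1) = (-1) * ℓ + 1 * i + (-1) by ring,
      show (ℓ : ℤ) - i + 1 = 1 * ℓ + (-1) * i + 1 by ring,
      show (ℓ : ℤ) - i = 1 * ℓ + (-1) * i + 0 by ring,
      show (ℓ : ℤ) - 2 * i = 1 * ℓ + (-2) * i + 0 by ring,
      show 2 * i - (ℓ : ℤ) = (-1) * ℓ + 2 * i + 0 by ring,
      p1, p2, p3, p4, p5, p6, p7, p8, zpow_neg q i, ← hx]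
    have hx2 : x ^ (-2 : ℤ) = x⁻¹ * x⁻¹ := by rw [zpow_neg, zpow_ofNat, sq, mul_inv]
    have hx2' : x ^ (2 : ℤ) = x * x := by rw [zpow_ofNat, sq]
    simp only [hx2, hx2', zpow_neg_one, zpow_zero, zpow_one, mul_one, one_mul]
    rw [div_mul_div_comm, div_mul_div_comm, ← sub_div, div_eq_iff (mul_ne_zero hd hd)]
    have : ∀ r : ℂ, (q - q⁻¹)⁻¹ * r * ((q - q⁻¹) * (q - q⁻¹)) = r * (q - q⁻¹) := by
      intro r; field_simp
    rw [this]
    ring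
  refine end_ext fun i => ?_
  have h := hnum i
  cases i with
  | zero =>
    simp only [Module.End.mul_apply, LinearMap.smul_apply, LinearMap.sub_apply, K1_evec, K0_evec,
      E1m_evec, E1p_evec_succ, E1p_evec_zero, map_smul, map_zero, smul_smul, ← sub_smul, sub_zero]
    congr 1
    rw [← h]; simp [qnum]
  | succ i =>
    simp only [Module.End.mul_apply, LinearMap.smul_apply, LinearMap.sub_apply, K1_evec, K0_evec,
      E1m_evec, E1p_evec_succ, map_smul, smul_smul, ← sub_smul]
    congr 1
    rw [← h]; push_cast
    congr 3
    ring_nf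

/-! ### The diagonal part of the `R`-matrix -/

/-- The exponent of the diagonal part `q^(h ⊗ h / 2)` on `vᵢ ⊗ vⱼ`, up to the constant `ℓm/2`,
which is omitted so that no square root of `q` is needed. -/
def cexp (ℓ m i j : ℕ) : ℤ := 2 * i * j - i * m - j * ℓ

/-- The diagonal operator `vᵢ ⊗ vⱼ ↦ q^(2ij - im - jℓ) vᵢ ⊗ vⱼ`. -/
def cartan (q : ℂ) (ℓ m : ℕ) :
    Module.End ℂ (TensorProduct ℂ (Fin (ℓ + 1) → ℂ) (Fin (m + 1) → ℂ)) :=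
  ((Pi.basisFun ℂ (Fin (ℓ + 1))).tensorProduct (Pi.basisFun ℂ (Fin (m + 1)))).constr ℂ
    fun p => q ^ cexp ℓ m p.1 p.2 • (evec ℓ p.1 ⊗ₜ evec m p.2)

lemma cartan_evec (q : ℂ) (ℓ m i j : ℕ) :
    cartan q ℓ m (evec ℓ i ⊗ₜ evec m j) = q ^ cexp ℓ m i j • (evec ℓ i ⊗ₜ evec m j) := by
  rcases lt_or_ge ℓ i with h | h
  · simp [evec_eq_zero h]
  rcases lt_or_ge m j with h' | h'
  · simp [evec_eq_zero h']
  have := ((Pi.basisFun ℂ (Fin (ℓ + 1))).tensorProduct (Pi.basisFun ℂ (Fin (m + 1)))).constr_basis ℂ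
    (fun p => q ^ cexp ℓ m p.1 p.2 • (evec ℓ p.1 ⊗ₜ[ℂ] evec m p.2))
    (⟨i, by omega⟩, ⟨j, by omega⟩)
  rw [Module.Basis.tensorProduct_apply, Pi.basisFun_apply, Pi.basisFun_apply, ← evec_eq_single,
    ← evec_eq_single] at this
  exact this

lemma isUnit_cartan {q : ℂ} (hq0 : q ≠ 0) (ℓ m : ℕ) : IsUnit (cartan q ℓ m) := by
  have h : ∀ r s : ℂ, r * s = 1 → cartan r ℓ m * cartan s ℓ m = 1 := by
    intro r s hrs
    refine end_tensor_ext fun i j => ?_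
    rw [Module.End.mul_apply, cartan_evec, map_smul, cartan_evec, smul_smul, ← mul_zpow,
      mul_comm s, hrs, one_zpow, one_smul, Module.End.one_apply]
  exact ⟨⟨cartan q ℓ m, cartan q⁻¹ ℓ m, h _ _ (mul_inv_cancel₀ hq0), h _ _ (inv_mul_cancel₀ hq0)⟩,
    rfl⟩

section Cartan
open TensorProduct (map)
open LinearMap (id)

lemma cartan_F_one {q : ℂ} (hq0 : q ≠ 0) (ℓ m : ℕ) :
    cartan q ℓ m * map (evalE1m q ℓ) id = map (evalE1m q ℓ) (evalK0 q m) * cartan q ℓ m := by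
  refine end_tensor_ext fun i j => ?_
  simp only [Module.End.mul_apply, TensorProduct.map_tmul, LinearMap.id_apply, cartan_evec,
    map_smul, E1m_evec, K0_evec, ← TensorProduct.smul_tmul',
    TensorProduct.tmul_smul, smul_smul]
  congr 1
  have h : q ^ cexp ℓ m (i + 1) j = q ^ cexp ℓ m i j * q ^ (2 * (j : ℤ) - m) := by
    rw [← zpow_add₀ hq0]; congr 1; simp only [cexp]; push_cast; ring
  rw [h]; ring

lemma cartan_F_K {q : ℂ} (hq0 : q ≠ 0) (ℓ m : ℕ) :
    cartan q ℓ m * map (evalE1m q ℓ) (evalK1 q m) = map (evalE1m q ℓ) id * cartan q ℓ m := by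
  refine end_tensor_ext fun i j => ?_
  simp only [Module.End.mul_apply, TensorProduct.map_tmul, LinearMap.id_apply, cartan_evec,
    map_smul, E1m_evec, K1_evec, ← TensorProduct.smul_tmul',
    TensorProduct.tmul_smul, smul_smul]
  congr 1
  have h : q ^ cexp ℓ m i j = q ^ cexp ℓ m (i + 1) j * q ^ ((m : ℤ) - 2 * j) := by
    rw [← zpow_add₀ hq0]; congr 1; simp only [cexp]; push_cast; ring
  rw [h]; ring

lemma cartan_one_F {q : ℂ} (hq0 : q ≠ 0) (ℓ m : ℕ) :
    cartan q ℓ m * map id (evalE1m q m) = map (evalK0 q ℓ) (evalE1m q m) * cartan q ℓ m := by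
  refine end_tensor_ext fun i j => ?_
  simp only [Module.End.mul_apply, TensorProduct.map_tmul, LinearMap.id_apply, cartan_evec,
    map_smul, E1m_evec, K0_evec, ← TensorProduct.smul_tmul',
    TensorProduct.tmul_smul, smul_smul]
  congr 1
  have h : q ^ cexp ℓ m i (j + 1) = q ^ cexp ℓ m i j * q ^ (2 * (i : ℤ) - ℓ) := by
    rw [← zpow_add₀ hq0]; congr 1; simp only [cexp]; push_cast; ring
  rw [h]; ring

lemma cartan_E_one {q : ℂ} (hq0 : q ≠ 0) (ℓ m : ℕ) :
    cartan q ℓ m * map (evalE1p q ℓ) id = map (evalE1p q ℓ) (evalK1 q m) * cartan q ℓ m := by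
  refine end_tensor_ext fun i j => ?_
  cases i with
  | zero => simp [E1p_evec_zero, cartan_evec]
  | succ i =>
    simp only [Module.End.mul_apply, TensorProduct.map_tmul, LinearMap.id_apply, cartan_evec,
      map_smul, E1p_evec_succ, K1_evec, ← TensorProduct.smul_tmul',
      TensorProduct.tmul_smul, smul_smul]
    congr 1
    have h : q ^ cexp ℓ m i j = q ^ cexp ℓ m (i + 1) j * q ^ ((m : ℤ) - 2 * j) := by
      rw [← zpow_add₀ hq0]; congr 1; simp only [cexp]; push_cast; ring
    rw [h]; ring

lemma cartan_K_E {q : ℂ} (hq0 : q ≠ 0) (ℓ m : ℕ) :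
    cartan q ℓ m * map (evalK0 q ℓ) (evalE1p q m) = map id (evalE1p q m) * cartan q ℓ m := by
  refine end_tensor_ext fun i j => ?_
  cases j with
  | zero => simp [E1p_evec_zero, cartan_evec]
  | succ j =>
    simp only [Module.End.mul_apply, TensorProduct.map_tmul, LinearMap.id_apply, cartan_evec,
      map_smul, E1p_evec_succ, K0_evec, ← TensorProduct.smul_tmul',
      TensorProduct.tmul_smul, smul_smul]
    congr 1
    have h : q ^ cexp ℓ m i (j + 1) = q ^ cexp ℓ m i j * q ^ (2 * (i : ℤ) - ℓ) := by
      rw [← zpow_add₀ hq0]; congr 1; simp only [cexp]; push_cast; ring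
    rw [h]; ring

lemma cartan_K0 (q : ℂ) (ℓ m : ℕ) :
    cartan q ℓ m * map (evalK0 q ℓ) (evalK0 q m)
      = map (evalK0 q ℓ) (evalK0 q m) * cartan q ℓ m := by
  refine end_tensor_ext fun i j => ?_
  simp only [Module.End.mul_apply, TensorProduct.map_tmul, cartan_evec, map_smul, K0_evec,
    ← TensorProduct.smul_tmul', TensorProduct.tmul_smul, smul_smul]
  congr 1; ring

lemma cartan_K1 (q : ℂ) (ℓ m : ℕ) :
    cartan q ℓ m * map (evalK1 q ℓ) (evalK1 q m)
      = map (evalK1 q ℓ) (evalK1 q m) * cartan q ℓ m := by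
  refine end_tensor_ext fun i j => ?_
  simp only [Module.End.mul_apply, TensorProduct.map_tmul, cartan_evec, map_smul, K1_evec,
    ← TensorProduct.smul_tmul', TensorProduct.tmul_smul, smul_smul]
  congr 1; ring

end Cartan

/-! ### The intertwiner -/

section Intertwiner
open TensorProduct (map)
open LinearMap (id)

/-- The quasi-`R`-matrix `∑ₙ cₙ Fⁿ ⊗ Eⁿ` on `V(ℓ,a) ⊗ V(m)`; the range of summation contains all
nonzero terms. -/
def quasiR (q : ℂ) (ℓ m : ℕ) :
    Module.End ℂ (TensorProduct ℂ (Fin (ℓ + 1) → ℂ) (Fin (m + 1) → ℂ)) :=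
  theta q (map (evalE1m q ℓ) id) (map id (evalE1p q m)) (ℓ + m + 1)

lemma map_mul_id {V W : Type*} [AddCommGroup V] [Module ℂ V] [AddCommGroup W] [Module ℂ W]
    (f : Module.End ℂ V) (g : Module.End ℂ W) :
    (map f id : Module.End ℂ (TensorProduct ℂ V W)) * map id g = map f g := by
  rw [← TensorProduct.map_mul]; rfl

lemma map_id_mul {V W : Type*} [AddCommGroup V] [Module ℂ V] [AddCommGroup W] [Module ℂ W]
    (f : Module.End ℂ V) (g : Module.End ℂ W) :
    (map id g : Module.End ℂ (TensorProduct ℂ V W)) * map f id = map f g := by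
  rw [← TensorProduct.map_mul]; rfl

lemma commute_map {V W : Type*} [AddCommGroup V] [Module ℂ V] [AddCommGroup W] [Module ℂ W]
    (f : Module.End ℂ V) (g : Module.End ℂ W) :
    Commute (map f id : Module.End ℂ (TensorProduct ℂ V W)) (map id g) := by
  rw [Commute, SemiconjBy, map_mul_id, map_id_mul]

lemma map_E1m_pow (q : ℂ) (ℓ m : ℕ) :
    (map (evalE1m q ℓ) id : Module.End ℂ
      (TensorProduct ℂ (Fin (ℓ + 1) → ℂ) (Fin (m + 1) → ℂ))) ^ (ℓ + m + 1) = 0 := by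
  rw [TensorProduct.map_pow, pow_eq_zero_of_le (by omega) (E1m_pow q ℓ),
    TensorProduct.map_zero_left]

lemma map_E1p_pow (q : ℂ) (ℓ m : ℕ) :
    (map id (evalE1p q m) : Module.End ℂ
      (TensorProduct ℂ (Fin (ℓ + 1) → ℂ) (Fin (m + 1) → ℂ))) ^ (ℓ + m + 1) = 0 := by
  rw [TensorProduct.map_pow, pow_eq_zero_of_le (by omega) (E1p_pow q m),
    TensorProduct.map_zero_right]

lemma quasiR_F {q : ℂ} (hq0 : q ≠ 0) (hq : ∀ n : ℕ, 0 < n → q ^ n ≠ 1) (ℓ m : ℕ) :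
    quasiR q ℓ m * (map id (evalE1m q m) + map (evalE1m q ℓ) (evalK0 q m))
      = (map id (evalE1m q m) + map (evalE1m q ℓ) (evalK1 q m)) * quasiR q ℓ m := by
  have h : ∀ n : ℕ, _ := fun n => congrArg
    (Module.End.lTensorAlgHom ℂ (Fin (m + 1) → ℂ) (Fin (ℓ + 1) → ℂ))
    (pow_comm_rel q (E1p_E1m hq0 hq m) (E1p_K1 hq0 m) (K0_E1p hq0 m) n)
  simp only [map_sub, map_mul, map_pow, map_smul] at h
  have := theta_intertwines hq0 hq (x := map (evalE1m q ℓ) id) (commute_map _ _) (commute_map _ _)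
    (commute_map _ _) h (map_E1m_pow q ℓ m)
  rw [← map_mul_id (evalE1m q ℓ) (evalK0 q m), ← map_mul_id (evalE1m q ℓ) (evalK1 q m)]
  exact this

lemma quasiR_E {q : ℂ} (hq0 : q ≠ 0) (hq : ∀ n : ℕ, 0 < n → q ^ n ≠ 1) (ℓ m : ℕ) :
    quasiR q ℓ m * (map (evalE1p q ℓ) id + map (evalK1 q ℓ) (evalE1p q m))
      = (map (evalE1p q ℓ) id + map (evalK0 q ℓ) (evalE1p q m)) * quasiR q ℓ m := by
  have hFE : evalE1m q ℓ * evalE1p q ℓ - evalE1p q ℓ * evalE1m q ℓ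
      = (q - q⁻¹)⁻¹ • (evalK0 q ℓ - evalK1 q ℓ) := by
    rw [← neg_sub, E1p_E1m hq0 hq, ← neg_sub (evalK1 q ℓ), smul_neg]
  have h : ∀ n : ℕ, _ := fun n => congrArg
    (Module.End.rTensorAlgHom ℂ (Fin (ℓ + 1) → ℂ) (Fin (m + 1) → ℂ))
    (pow_comm_rel q hFE (E1m_K0 hq0 ℓ) (K1_E1m hq0 ℓ) n)
  simp only [map_sub, map_mul, map_pow, map_smul] at h
  have := theta_intertwines hq0 hq (x := map id (evalE1p q m)) (commute_map _ _).symm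
    (commute_map _ _).symm (commute_map _ _).symm h (map_E1p_pow q ℓ m)
  rw [← map_id_mul (evalK1 q ℓ), ← map_id_mul (evalK0 q ℓ), quasiR, theta_swap q (commute_map _ _)]
  exact this

lemma quasiR_F_one (q : ℂ) (ℓ m : ℕ) : Commute (map (evalE1m q ℓ) id) (quasiR q ℓ m) :=
  theta_commute q (commute_map _ _) ((Commute.refl _).mul_right (commute_map _ _)) _

lemma quasiR_K0 {q : ℂ} (hq0 : q ≠ 0) (ℓ m : ℕ) :
    Commute (map (evalK0 q ℓ) (evalK0 q m)) (quasiR q ℓ m) := by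
  refine theta_commute q (commute_map _ _) ?_ _
  rw [map_mul_id, Commute, SemiconjBy, ← TensorProduct.map_mul, ← TensorProduct.map_mul,
    K0_E1p hq0, E1m_K0 hq0, TensorProduct.map_smul_left, TensorProduct.map_smul_right]

lemma quasiR_K1 {q : ℂ} (hq0 : q ≠ 0) (ℓ m : ℕ) :
    Commute (map (evalK1 q ℓ) (evalK1 q m)) (quasiR q ℓ m) := by
  refine theta_commute q (commute_map _ _) ?_ _
  rw [map_mul_id, Commute, SemiconjBy, ← TensorProduct.map_mul, ← TensorProduct.map_mul,
    K1_E1m hq0, E1p_K1 hq0, TensorProduct.map_smul_left, TensorProduct.map_smul_right]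

end Intertwiner

/-- If `T` conjugates `X` into `Y` and the flip conjugates `Y` into `Z`, then `T` followed by the
flip conjugates `X` into `Z`. -/
lemma flip_intertwines {V W : Type*} [AddCommGroup V] [Module ℂ V] [AddCommGroup W] [Module ℂ W]
    {T X Y : Module.End ℂ (TensorProduct ℂ V W)} {Z : Module.End ℂ (TensorProduct ℂ W V)}
    (h : T * X = Y * T)
    (hZ : (TensorProduct.comm ℂ V W).toLinearMap ∘ₗ Y = Z ∘ₗ (TensorProduct.comm ℂ V W).toLinearMap) :
    ((TensorProduct.comm ℂ V W).toLinearMap ∘ₗ T) ∘ₗ X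
      = Z ∘ₗ ((TensorProduct.comm ℂ V W).toLinearMap ∘ₗ T) := by
  have h' : T ∘ₗ X = Y ∘ₗ T := h
  rw [LinearMap.comp_assoc, h', ← LinearMap.comp_assoc, hZ, LinearMap.comp_assoc]

/-- `V(ℓ,a) ⊗ V(m)` and `V(m) ⊗ V(ℓ,a)` are isomorphic as
`U'_q(L(sl₂))`-modules. -/
theorem stmt18 (q : ℂ) (hq0 : q ≠ 0) (hq : ∀ n : ℕ, 0 < n → q ^ n ≠ 1)
    (ℓ m : ℕ) (hℓ : 1 ≤ ℓ) (hm : 1 ≤ m) (a : ℂ) (ha : a ≠ 0) :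
    ∃ R : TensorProduct ℂ (Fin (ℓ + 1) → ℂ) (Fin (m + 1) → ℂ) ≃ₗ[ℂ]
        TensorProduct ℂ (Fin (m + 1) → ℂ) (Fin (ℓ + 1) → ℂ),
      IntertwinesAll R.toLinearMap
        (dE0 q ℓ m a 0) (dE1p q ℓ m) (dE1m q ℓ m) (dK0 q ℓ m) (dK1 q ℓ m)
        (dE0 q m ℓ 0 a) (dE1p q m ℓ) (dE1m q m ℓ) (dK0 q m ℓ) (dK1 q m ℓ) := by
  obtain ⟨u, hu⟩ : IsUnit (cartan q ℓ m * quasiR q ℓ m) :=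
    (isUnit_cartan hq0 ℓ m).mul (isUnit_theta q (commute_map _ _) (map_E1m_pow q ℓ m))
  refine ⟨(LinearMap.GeneralLinearGroup.toLinearEquiv u).trans (TensorProduct.comm ℂ _ _), ?_⟩
  have hR : ((LinearMap.GeneralLinearGroup.toLinearEquiv u).trans
      (TensorProduct.comm ℂ (Fin (ℓ + 1) → ℂ) (Fin (m + 1) → ℂ))).toLinearMap
      = (TensorProduct.comm ℂ _ _).toLinearMap ∘ₗ (cartan q ℓ m * quasiR q ℓ m) := by
    rw [← hu]; rfl
  rw [hR]
  have hflip : ∀ (f : Module.End ℂ (Fin (ℓ + 1) → ℂ)) (g : Module.End ℂ (Fin (m + 1) → ℂ)),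
      (TensorProduct.comm ℂ _ _).toLinearMap ∘ₗ TensorProduct.map f g
        = TensorProduct.map g f ∘ₗ (TensorProduct.comm ℂ _ _).toLinearMap :=
    fun f g => (TensorProduct.map_comp_comm_eq g f).symm
  refine ⟨flip_intertwines
      (Y := (a * q) • TensorProduct.map (evalE1m q ℓ) (evalK0 q m)) ?_ ?_,
    flip_intertwines (Y := TensorProduct.map (evalE1p q ℓ) (evalK1 q m)
      + TensorProduct.map LinearMap.id (evalE1p q m)) ?_ ?_,
    flip_intertwines (Y := TensorProduct.map (evalK0 q ℓ) (evalE1m q m)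
      + TensorProduct.map (evalE1m q ℓ) LinearMap.id) ?_ ?_,
    flip_intertwines (Y := TensorProduct.map (evalK0 q ℓ) (evalK0 q m)) ?_ ?_,
    flip_intertwines (Y := TensorProduct.map (evalK1 q ℓ) (evalK1 q m)) ?_ ?_⟩
  · rw [dE0, evalE0_zero, evalE0_eq, TensorProduct.map_zero_right, zero_add,
      TensorProduct.map_smul_left, mul_smul_comm, smul_mul_assoc, mul_assoc,
      ← (quasiR_F_one q ℓ m).eq, ← mul_assoc, cartan_F_one hq0, mul_assoc]
  · rw [dE0, evalE0_zero, evalE0_eq, TensorProduct.map_zero_left, add_zero,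
      TensorProduct.map_smul_right, LinearMap.comp_smul, hflip, LinearMap.smul_comp]
  · rw [dE1p, add_comm (TensorProduct.map (evalK1 q ℓ) _), mul_assoc, quasiR_E hq0 hq, ← mul_assoc,
      mul_add, cartan_E_one hq0, cartan_K_E hq0, ← add_mul, mul_assoc]
  · rw [dE1p, LinearMap.comp_add, hflip, hflip, LinearMap.add_comp]
  · rw [dE1m, mul_assoc, quasiR_F hq0 hq, ← mul_assoc, mul_add, cartan_one_F hq0, cartan_F_K hq0,
      ← add_mul, mul_assoc]
  · rw [dE1m, LinearMap.comp_add, hflip, hflip, LinearMap.add_comp]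
    exact add_comm _ _
  · rw [dK0, mul_assoc, ← (quasiR_K0 hq0 ℓ m).eq, ← mul_assoc, cartan_K0, mul_assoc]
  · rw [dK0, hflip]
  · rw [dK1, mul_assoc, ← (quasiR_K1 hq0 ℓ m).eq, ← mul_assoc, cartan_K1, mul_assoc]
  · rw [dK1, hflip]

end
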